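/- Cocycle relation for first Chern–Simons type classes (case k = 2 of the descent equations): Let A_0, A_1, A_2 be lattice 1-forms on ℤ^D, set F_i = dA_i, η^{i,j} = A_i − A_j, and let r ≥ 2. Define Q_r^{(1)}(A, A') = Σ_{m=0}^{r−1} (dA)^m ∧ (A' − A) ∧ (dA')^{r−1−m} and Q_r^{(2)}(A_0,A_1,A_2) = Σ_{m_0+m_1+m_2 = r−2, m_i ∈ ℕ} F_0^{m_0} ∧ η^{1,0} ∧ F_1^{m_1} ∧ η^{2,1} ∧ F_2^{m_2}, with all products the noncommutative wedge. Then Q_r^{(1)}(A_1, A_2) − Q_r^{(1)}(A_0, A_2) + Q_r^{(1)}(A_0, A_1) = d Q_r^{(2)}(A_0, A_1, A_2). -/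

import Mathlib

open scoped BigOperators

/-- A site of the hypercubic lattice `ℤ^D`. -/
abbrev Site (D : ℕ) := Fin D → ℤ

/-- The coefficient function of a lattice form on `ℤ^D`: to each site it assigns a
real coefficient depending on a sequence of direction indices (a `k`-form only
uses the first `k` indices). -/
abbrev Coeff (D : ℕ) := Site D → (ℕ → Fin D) → ℝ

/-- Shift a site by the `μ`-th standard basis vector `ê_μ`. -/
def shiftSite {D : ℕ} (n : Site D) (μ : Fin D) : Site D :=
  fun ν => n ν + if ν = μ then 1 else 0

/-- Forward difference operator `(Δ_μ f)(n) = f(n + ê_μ) - f(n)`. -/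
def fdiff {D : ℕ} (μ : Fin D) (f : Site D → ℝ) (n : Site D) : ℝ :=
  f (shiftSite n μ) - f n

/-- Shift a site by `ê_{μ 0} + ê_{μ 1} + ⋯ + ê_{μ (k-1)}`. -/
def multiShift {D : ℕ} (k : ℕ) (n : Site D) (μ : ℕ → Fin D) : Site D :=
  fun ν => n ν + ∑ i ∈ Finset.range k, (if ν = μ i then 1 else 0)

/-- Antisymmetrization of a coefficient function over its first `k` indices. -/
noncomputable def alt {D : ℕ} (k : ℕ) (c : Coeff D) : Coeff D :=
  fun n μ => ((k.factorial : ℝ))⁻¹ *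
    ∑ σ : Equiv.Perm (Fin k), ((Equiv.Perm.sign σ : ℤ) : ℝ) *
      c n (fun i => if h : i < k then μ ↑(σ ⟨i, h⟩) else μ i)

/-- The lattice exterior derivative of a `k`-form: the antisymmetrization over all
`k+1` indices of `Δ_μ ω_{μ₁⋯μ_k}(n)`. -/
noncomputable def extd {D : ℕ} (k : ℕ) (ω : Coeff D) : Coeff D :=
  alt (k+1) (fun n μ => fdiff (μ 0) (fun x => ω x (fun i => μ (i+1))) n)

/-- The noncommutative wedge product of a `k`-form and an `l`-form on the lattice:
the antisymmetrization over all `k+l` indices of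
`ω_{μ₁⋯μ_k}(n) · θ_{ν₁⋯ν_l}(n + ê_{μ₁} + ⋯ + ê_{μ_k})`. -/
noncomputable def wedge {D : ℕ} (k l : ℕ) (ω θ : Coeff D) : Coeff D :=
  alt (k+l) (fun n μ => ω n μ * θ (multiShift k n μ) (fun i => μ (i+k)))

/-- Iterated noncommutative wedge power of a 2-form (the empty product is the
constant `1`, a 0-form). -/
noncomputable def wpow {D : ℕ} (F : Coeff D) : ℕ → Coeff D
  | 0 => fun _ _ => 1
  | m+1 => wedge 2 (2*m) F (wpow F m)

/-- Noncommutative wedge product of a list of (degree, form) pairs. -/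
noncomputable def wedgeList {D : ℕ} : List (ℕ × Coeff D) → Coeff D
  | [] => fun _ _ => 1
  | (d, ω) :: rest => wedge d ((rest.map Prod.fst).sum) ω (wedgeList rest)

/-- `ω` is a genuine lattice `k`-form: its coefficient depends only on the first
`k` indices and is totally antisymmetric in them. -/
def IsLatticeForm (D k : ℕ) (ω : Coeff D) : Prop :=
  (∀ (n : Site D) (μ ν : ℕ → Fin D), (∀ i < k, μ i = ν i) → ω n μ = ω n ν) ∧
  (∀ (n : Site D) (μ : ℕ → Fin D) (σ : Equiv.Perm (Fin k)),
    ω n (fun i => if h : i < k then μ ↑(σ ⟨i, h⟩) else μ i)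
      = ((Equiv.Perm.sign σ : ℤ) : ℝ) * ω n μ)

/-- Extend a tuple `m : Fin j → ℕ` to `ℕ → ℕ` by zero. -/
def mext {j : ℕ} (m : Fin j → ℕ) : ℕ → ℕ :=
  fun i => if h : i < j then m ⟨i, h⟩ else 0

/-- The curvature 2-form `F = dA` of a lattice 1-form `A`. -/
noncomputable def curv {D : ℕ} (A : Coeff D) : Coeff D := extd 1 A

/-- The standard descent product
`F_0^{m_0} ∧ η^{1,0} ∧ F_1^{m_1} ∧ η^{2,1} ∧ ⋯ ∧ η^{k,k-1} ∧ F_k^{m_k}`,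
with `F_i = dA_i` and `η^{i,i-1} = A_i - A_{i-1}`, as a list of (degree, form) pairs. -/
noncomputable def descentList {D : ℕ} (k : ℕ) (A : ℕ → Coeff D) (m : ℕ → ℕ) : List (ℕ × Coeff D) :=
  (2 * m 0, wpow (curv (A 0)) (m 0)) ::
    (List.range k).flatMap (fun i =>
      [(1, A (i+1) - A i), (2 * m (i+1), wpow (curv (A (i+1))) (m (i+1)))])

/-- The Chern–Simons type characteristic class `Q_r^{(k)}(A_0,…,A_k)` on the lattice:
the sum over compositions `m_0 + ⋯ + m_k = r - k` of the descent products. -/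
noncomputable def Qpoly {D : ℕ} (r k : ℕ) (A : ℕ → Coeff D) : Coeff D :=
  ∑ m ∈ Finset.Nat.antidiagonalTuple (k+1) (r - k), wedgeList (descentList k A (mext m))

/-- The first Chern–Simons type class
`Q_r^{(1)}(A, A') = Σ_{m=0}^{r−1} (dA)^m ∧ (A' − A) ∧ (dA')^{r−1−m}`. -/
noncomputable def Q1 {D : ℕ} (r : ℕ) (A A' : Coeff D) : Coeff D :=
  ∑ m ∈ Finset.range r,
    wedgeList [(2 * m, wpow (curv A) m), (1, A' - A),
               (2 * (r - 1 - m), wpow (curv A') (r - 1 - m))]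

/-- The second Chern–Simons type class
`Q_r^{(2)}(A₀,A₁,A₂) = Σ_{m₀+m₁+m₂=r−2} F₀^{m₀} ∧ η^{1,0} ∧ F₁^{m₁} ∧ η^{2,1} ∧ F₂^{m₂}`. -/
noncomputable def Q2 {D : ℕ} (r : ℕ) (A₀ A₁ A₂ : Coeff D) : Coeff D :=
  ∑ m ∈ Finset.Nat.antidiagonalTuple 3 (r - 2),
    wedgeList [(2 * m 0, wpow (curv A₀) (m 0)), (1, A₁ - A₀),
               (2 * m 1, wpow (curv A₁) (m 1)), (1, A₂ - A₁),
               (2 * m 2, wpow (curv A₂) (m 2))]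


def pm {D : ℕ} (k : ℕ) (σ : Equiv.Perm (Fin k)) (μ : ℕ → Fin D) : ℕ → Fin D :=
  fun i => if h : i < k then μ ↑(σ ⟨i, h⟩) else μ i

theorem alt_def {D : ℕ} (k : ℕ) (c : Coeff D) (n : Site D) (μ : ℕ → Fin D) :
    alt k c n μ = ((k.factorial : ℝ))⁻¹ *
    ∑ σ : Equiv.Perm (Fin k), ((Equiv.Perm.sign σ : ℤ) : ℝ) * c n (pm k σ μ) := rfl

theorem pm_pm {D : ℕ} (k : ℕ) (σ τ : Equiv.Perm (Fin k)) (μ : ℕ → Fin D) :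
    pm k σ (pm k τ μ) = pm k (τ * σ) μ := by
  funext i
  unfold pm
  by_cases h : i < k <;> simp [h]

theorem sgn_sq {k : ℕ} (σ : Equiv.Perm (Fin k)) :
    ((Equiv.Perm.sign σ : ℤ) : ℝ) * ((Equiv.Perm.sign σ : ℤ) : ℝ) = 1 := by
  have : ((Equiv.Perm.sign σ : ℤ)) * ((Equiv.Perm.sign σ : ℤ)) = 1 := by
    rw [← Units.val_mul, Int.units_mul_self]; rfl
  exact_mod_cast this

theorem alt_pm {D : ℕ} (N : ℕ) (τ : Equiv.Perm (Fin N)) (c : Coeff D) (n : Site D)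
    (μ : ℕ → Fin D) :
    alt N (fun n μ => c n (pm N τ μ)) n μ = ((Equiv.Perm.sign τ : ℤ) : ℝ) * alt N c n μ := by
  simp only [alt_def, pm_pm]
  rw [mul_left_comm]
  congr 1
  rw [Finset.mul_sum]
  rw [← Equiv.sum_comp (Equiv.mulRight τ) (fun σ => ((Equiv.Perm.sign τ : ℤ) : ℝ) *
    (((Equiv.Perm.sign σ : ℤ) : ℝ) * c n (pm N σ μ)))]
  refine Finset.sum_congr rfl fun σ _ => ?_
  simp only [Equiv.coe_mulRight, Equiv.Perm.sign_mul, Units.val_mul, Int.cast_mul]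
  have := sgn_sq τ
  linear_combination (-((Equiv.Perm.sign σ : ℤ) : ℝ) * c n (pm N (σ * τ) μ)) * this

theorem alt_avg {D : ℕ} (N K : ℕ) (f : Equiv.Perm (Fin K) → Equiv.Perm (Fin N))
    (hf : ∀ σ, Equiv.Perm.sign (f σ) = Equiv.Perm.sign σ) (c : Coeff D) :
    alt N (fun n μ => ((K.factorial : ℝ))⁻¹ *
    ∑ σ : Equiv.Perm (Fin K), ((Equiv.Perm.sign σ : ℤ) : ℝ) * c n (pm N (f σ) μ)) = alt N c := by
  funext n μ
  have h1 : alt N (fun n μ => ((K.factorial : ℝ))⁻¹ *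
    ∑ σ : Equiv.Perm (Fin K), ((Equiv.Perm.sign σ : ℤ) : ℝ) * c n (pm N (f σ) μ)) n μ
    = ((K.factorial : ℝ))⁻¹ * ∑ σ : Equiv.Perm (Fin K), ((Equiv.Perm.sign σ : ℤ) : ℝ) *
      alt N (fun n μ => c n (pm N (f σ) μ)) n μ := by
    simp only [alt_def, Finset.mul_sum]
    rw [Finset.sum_comm]
    refine Finset.sum_congr rfl fun σ _ => Finset.sum_congr rfl fun τ _ => ?_
    ring
  rw [h1]
  simp only [alt_pm, hf, ← mul_assoc, sgn_sq, one_mul]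
  rw [Finset.sum_const, Finset.card_univ, Fintype.card_perm, Fintype.card_fin, nsmul_eq_mul,
    ← mul_assoc, inv_mul_cancel₀ (by positivity), one_mul]

def embL (k l : ℕ) (σ : Equiv.Perm (Fin k)) : Equiv.Perm (Fin (k + l)) :=
  finSumFinEquiv.permCongr (Equiv.sumCongr σ 1)
def embR (k l : ℕ) (σ : Equiv.Perm (Fin l)) : Equiv.Perm (Fin (k + l)) :=
  finSumFinEquiv.permCongr (Equiv.sumCongr 1 σ)

theorem sign_embL (k l : ℕ) (σ : Equiv.Perm (Fin k)) :
    Equiv.Perm.sign (embL k l σ) = Equiv.Perm.sign σ := by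
  rw [embL, Equiv.Perm.sign_permCongr]
  exact (Equiv.Perm.sign_sumCongr σ 1).trans (by simp)
theorem sign_embR (k l : ℕ) (σ : Equiv.Perm (Fin l)) :
    Equiv.Perm.sign (embR k l σ) = Equiv.Perm.sign σ := by
  rw [embR, Equiv.Perm.sign_permCongr]
  exact (Equiv.Perm.sign_sumCongr 1 σ).trans (by simp)

theorem pm_embL {D : ℕ} (k l : ℕ) (σ : Equiv.Perm (Fin k)) (μ : ℕ → Fin D) :
    pm (k + l) (embL k l σ) μ = pm k σ μ := by
  funext i
  unfold pm
  by_cases h : i < k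
  · have h' : i < k + l := by omega
    have : (⟨i, h'⟩ : Fin (k + l)) = Fin.castAdd l ⟨i, h⟩ := rfl
    simp only [h, h', dif_pos, this, embL, Equiv.permCongr_apply, finSumFinEquiv_symm_apply_castAdd]
    simp
  · by_cases h' : i < k + l
    · have : (⟨i, h'⟩ : Fin (k + l)) = Fin.natAdd k ⟨i - k, by omega⟩ := by
        ext; simp; omega
      simp only [h, h', dif_pos, this, embL, Equiv.permCongr_apply,
        finSumFinEquiv_symm_apply_natAdd]
      simp
      congr 1; omega
    · simp [h, h']

theorem pm_embR_lt {D : ℕ} (k l : ℕ) (σ : Equiv.Perm (Fin l)) (μ : ℕ → Fin D) (i : ℕ)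
    (h : i < k) : pm (k + l) (embR k l σ) μ i = μ i := by
  unfold pm
  have h' : i < k + l := by omega
  have : (⟨i, h'⟩ : Fin (k + l)) = Fin.castAdd l ⟨i, h⟩ := rfl
  simp only [h', dif_pos, this, embR, Equiv.permCongr_apply, finSumFinEquiv_symm_apply_castAdd]
  simp

theorem pm_embR_add {D : ℕ} (k l : ℕ) (σ : Equiv.Perm (Fin l)) (μ : ℕ → Fin D) :
    (fun i => pm (k + l) (embR k l σ) μ (i + k)) = pm l σ (fun i => μ (i + k)) := by
  funext i
  unfold pm
  by_cases h : i < l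
  · have h' : i + k < k + l := by omega
    have : (⟨i + k, h'⟩ : Fin (k + l)) = Fin.natAdd k ⟨i, h⟩ := by
      ext; simp; omega
    simp only [h, h', dif_pos, this, embR, Equiv.permCongr_apply,
      finSumFinEquiv_symm_apply_natAdd]
    simp
    congr 1; omega
  · have h' : ¬ (i + k < k + l) := by omega
    simp [h, h']

def Dep {D : ℕ} (k : ℕ) (ω : Coeff D) : Prop :=
  ∀ (n : Site D) (μ ν : ℕ → Fin D), (∀ i < k, μ i = ν i) → ω n μ = ω n ν

def tens {D : ℕ} (k : ℕ) (ω θ : Coeff D) : Coeff D :=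
  fun n μ => ω n μ * θ (multiShift k n μ) (fun i => μ (i+k))

def del {D : ℕ} (ω : Coeff D) : Coeff D :=
  fun n μ => fdiff (μ 0) (fun x => ω x (fun i => μ (i+1))) n

theorem wedge_eq {D : ℕ} (k l : ℕ) (ω θ : Coeff D) : wedge k l ω θ = alt (k+l) (tens k ω θ) := rfl
theorem extd_eq {D : ℕ} (k : ℕ) (ω : Coeff D) : extd k ω = alt (k+1) (del ω) := rfl

theorem multiShift_congr {D : ℕ} (k : ℕ) (n : Site D) (μ ν : ℕ → Fin D) (h : ∀ i < k, μ i = ν i) :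
    multiShift k n μ = multiShift k n ν := by
  funext a
  unfold multiShift
  congr 1
  refine Finset.sum_congr rfl fun i hi => ?_
  rw [h i (Finset.mem_range.1 hi)]

theorem multiShift_pm {D : ℕ} (k : ℕ) (n : Site D) (σ : Equiv.Perm (Fin k)) (μ : ℕ → Fin D) :
    multiShift k n (pm k σ μ) = multiShift k n μ := by
  funext a
  unfold multiShift
  congr 1
  rw [Finset.sum_range, Finset.sum_range,
    ← Equiv.sum_comp σ (fun i => if a = μ ↑i then 1 else 0)]
  refine Finset.sum_congr rfl fun i hi => ?_
  simp [pm]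

theorem alt_alt_left {D : ℕ} (k l : ℕ) (ω θ : Coeff D) :
    alt (k+l) (tens k (alt k ω) θ) = alt (k+l) (tens k ω θ) := by
  rw [← alt_avg (k+l) k (embL k l) (sign_embL k l) (tens k ω θ)]
  congr 1
  funext n μ
  simp only [tens, pm_embL, multiShift_pm, alt_def]
  rw [mul_assoc, Finset.sum_mul]
  congr 1
  refine Finset.sum_congr rfl fun σ _ => ?_
  rw [mul_assoc]
  congr 4
  funext i
  simp [pm]

theorem alt_alt_right {D : ℕ} (k l : ℕ) (ω θ : Coeff D) (hω : Dep k ω) :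
    alt (k+l) (tens k ω (alt l θ)) = alt (k+l) (tens k ω θ) := by
  rw [← alt_avg (k+l) l (embR k l) (sign_embR k l) (tens k ω θ)]
  congr 1
  funext n μ
  simp only [tens, pm_embR_add, alt_def]
  rw [mul_left_comm, Finset.mul_sum]
  congr 1
  refine Finset.sum_congr rfl fun σ _ => ?_
  rw [hω n (pm (k + l) (embR k l σ) μ) μ (fun i hi => pm_embR_lt k l σ μ i hi),
    multiShift_congr k n (pm (k + l) (embR k l σ) μ) μ (fun i hi => pm_embR_lt k l σ μ i hi)]
  ring

theorem alt_del_alt {D : ℕ} (k : ℕ) (ω : Coeff D) :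
    alt (k+1) (del (alt k ω)) = alt (k+1) (del ω) := by
  rw [Nat.add_comm k 1, ← alt_avg (1+k) k (embR 1 k) (sign_embR 1 k) (del ω)]
  congr 1
  funext n μ
  simp only [del, pm_embR_add, alt_def, fdiff]
  rw [← mul_sub, ← Finset.sum_sub_distrib]
  congr 1
  refine Finset.sum_congr rfl fun σ _ => ?_
  rw [pm_embR_lt 1 k σ μ 0 (by omega)]
  ring

theorem alt_alt {D : ℕ} (k : ℕ) (ω : Coeff D) : alt k (alt k ω) = alt k ω := by
  have := alt_avg k k (fun σ => σ) (fun _ => rfl) ω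
  exact this

theorem dep_alt {D : ℕ} (k : ℕ) (c : Coeff D) (h : Dep k c) : Dep k (alt k c) := by
  intro n μ ν hμ
  simp only [alt_def]
  congr 1
  refine Finset.sum_congr rfl fun σ _ => ?_
  congr 1
  apply h
  intro i hi
  simp only [pm, hi, dif_pos]
  exact hμ _ (σ ⟨i, hi⟩).2

theorem dep_tens {D : ℕ} (k l : ℕ) (ω θ : Coeff D) (h : Dep k ω) (h' : Dep l θ) :
    Dep (k+l) (tens k ω θ) := by
  intro n μ ν hμ
  unfold tens
  rw [h n μ ν (fun i hi => hμ i (by omega)),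
    multiShift_congr k n μ ν (fun i hi => hμ i (by omega))]
  congr 1
  exact h' _ _ _ (fun i hi => hμ _ (by omega))

theorem dep_del {D : ℕ} (k : ℕ) (ω : Coeff D) (h : Dep k ω) : Dep (k+1) (del ω) := by
  intro n μ ν hμ
  unfold del fdiff
  rw [hμ 0 (by omega)]
  have : ∀ x, ω x (fun i => μ (i+1)) = ω x (fun i => ν (i+1)) :=
    fun x => h _ _ _ (fun i hi => hμ _ (by omega))
  simp only [this]

theorem multiShift_add {D : ℕ} (k l : ℕ) (n : Site D) (μ : ℕ → Fin D) :
    multiShift l (multiShift k n μ) (fun i => μ (i+k)) = multiShift (k+l) n μ := by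
  funext a
  simp only [multiShift, Finset.sum_range_add, add_assoc]
  simp only [Nat.add_comm]

theorem tens_assoc {D : ℕ} (k l : ℕ) (ω θ ψ : Coeff D) :
    tens (k+l) (tens k ω θ) ψ = tens k ω (tens l θ ψ) := by
  funext n μ
  simp only [tens, multiShift_add, mul_assoc]
  simp only [Nat.add_assoc, Nat.add_comm k l]

theorem wedge_assoc {D : ℕ} (k l m : ℕ) (ω θ ψ : Coeff D) (h : Dep k ω) :
    wedge (k+l) m (wedge k l ω θ) ψ = wedge k (l+m) ω (wedge l m θ ψ) := by
  simp only [wedge_eq]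
  rw [alt_alt_left, alt_alt_right _ _ _ _ h, tens_assoc, Nat.add_assoc]

/-- genuine forms -/
def Fm {D : ℕ} (k : ℕ) (ω : Coeff D) : Prop := Dep k ω ∧ alt k ω = ω

theorem fm_wedge {D : ℕ} {k l : ℕ} {ω θ : Coeff D} (h : Fm k ω) (h' : Fm l θ) :
    Fm (k+l) (wedge k l ω θ) :=
  ⟨dep_alt _ _ (dep_tens _ _ _ _ h.1 h'.1), alt_alt _ _⟩

theorem fm_extd {D : ℕ} {k : ℕ} {ω : Coeff D} (h : Fm k ω) : Fm (k+1) (extd k ω) :=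
  ⟨dep_alt _ _ (dep_del _ _ h.1), alt_alt _ _⟩

theorem fm_one {D : ℕ} : Fm 0 (fun _ _ => 1 : Coeff D) := by
  refine ⟨fun _ _ _ _ => rfl, ?_⟩
  funext n μ
  simp [alt_def]

theorem fm_of {D : ℕ} {A : Coeff D} (h : IsLatticeForm D 1 A) : Fm 1 A := by
  refine ⟨h.1, ?_⟩
  funext n μ
  have : ∀ σ : Equiv.Perm (Fin 1), σ = 1 := fun σ => Subsingleton.elim _ _
  rw [alt_def, Fintype.sum_subsingleton _ 1]
  simp
  apply h.1
  intro i hi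
  simp [pm, hi]
  congr 1
  omega

theorem wedge_one {D : ℕ} {k : ℕ} {ω : Coeff D} (h : Fm k ω) :
    wedge k 0 ω (fun _ _ => 1) = ω := by
  have : tens k ω (fun _ _ => 1) = ω := by funext n μ; simp [tens]
  rw [wedge_eq, this]; exact h.2

theorem one_wedge {D : ℕ} {k : ℕ} {ω : Coeff D} (h : Fm k ω) :
    wedge 0 k (fun _ _ => 1) ω = ω := by
  have : tens 0 (fun _ _ => 1) ω = ω := by 
    funext n μ
    have : multiShift 0 n μ = n := by funext a; simp [multiShift]
    simp [tens, this]
  rw [wedge_eq, this, Nat.zero_add]; exact h.2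

theorem alt_add {D : ℕ} (k : ℕ) (a b : Coeff D) : alt k (a + b) = alt k a + alt k b := by
  funext n μ
  simp only [alt_def, Pi.add_apply, mul_add, Finset.sum_add_distrib]

theorem alt_smul {D : ℕ} (k : ℕ) (r : ℝ) (a : Coeff D) : alt k (r • a) = r • alt k a := by
  funext n μ
  simp only [alt_def, Pi.smul_apply, smul_eq_mul, Finset.mul_sum]
  refine Finset.sum_congr rfl fun σ _ => ?_
  ring

theorem wedge_add {D : ℕ} (k l : ℕ) (a b c : Coeff D) :
    wedge k l a (b + c) = wedge k l a b + wedge k l a c := by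
  simp only [wedge_eq, ← alt_add]
  congr 1; funext n μ; simp [tens, mul_add]

theorem add_wedge {D : ℕ} (k l : ℕ) (a b c : Coeff D) :
    wedge k l (a + b) c = wedge k l a c + wedge k l b c := by
  simp only [wedge_eq, ← alt_add]
  congr 1; funext n μ; simp [tens, add_mul]

theorem wedge_smul {D : ℕ} (k l : ℕ) (r : ℝ) (a b : Coeff D) :
    wedge k l a (r • b) = r • wedge k l a b := by
  simp only [wedge_eq, ← alt_smul]
  congr 1; funext n μ; simp [tens, mul_left_comm]

theorem smul_wedge {D : ℕ} (k l : ℕ) (r : ℝ) (a b : Coeff D) :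
    wedge k l (r • a) b = r • wedge k l a b := by
  simp only [wedge_eq, ← alt_smul]
  congr 1; funext n μ; simp [tens, mul_assoc]

theorem extd_add {D : ℕ} (k : ℕ) (a b : Coeff D) : extd k (a + b) = extd k a + extd k b := by
  simp only [extd_eq, ← alt_add]
  congr 1; funext n μ; simp [del, fdiff]; ring

theorem extd_smul {D : ℕ} (k : ℕ) (r : ℝ) (a : Coeff D) : extd k (r • a) = r • extd k a := by
  simp only [extd_eq, ← alt_smul]
  congr 1; funext n μ; simp [del, fdiff]; ring

noncomputable def wL {D : ℕ} (k l : ℕ) (b : Coeff D) : Coeff D →ₗ[ℝ] Coeff D where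
  toFun a := wedge k l a b
  map_add' a a' := add_wedge k l a a' b
  map_smul' r a := smul_wedge k l r a b
noncomputable def wR {D : ℕ} (k l : ℕ) (a : Coeff D) : Coeff D →ₗ[ℝ] Coeff D where
  toFun b := wedge k l a b
  map_add' b b' := wedge_add k l a b b'
  map_smul' r b := wedge_smul k l r a b
noncomputable def dL {D : ℕ} (k : ℕ) : Coeff D →ₗ[ℝ] Coeff D where
  toFun b := extd k b
  map_add' b b' := extd_add k b b'
  map_smul' r b := extd_smul k r b

theorem wedge_sub {D : ℕ} (k l : ℕ) (a b c : Coeff D) :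
    wedge k l a (b - c) = wedge k l a b - wedge k l a c := (wR k l a).map_sub b c
theorem sub_wedge {D : ℕ} (k l : ℕ) (a b c : Coeff D) :
    wedge k l (a - b) c = wedge k l a c - wedge k l b c := (wL k l c).map_sub a b
theorem wedge_zero {D : ℕ} (k l : ℕ) (a : Coeff D) :
    wedge k l a 0 = 0 := (wR k l a).map_zero
theorem zero_wedge {D : ℕ} (k l : ℕ) (a : Coeff D) :
    wedge k l 0 a = 0 := (wL k l a).map_zero
theorem extd_sub {D : ℕ} (k : ℕ) (b c : Coeff D) :
    extd k (b - c) = extd k b - extd k c := (dL k).map_sub b c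
theorem wedge_sum {D : ℕ} {ι : Type*} (s : Finset ι) (k l : ℕ) (a : Coeff D) (f : ι → Coeff D) :
    wedge k l a (∑ i ∈ s, f i) = ∑ i ∈ s, wedge k l a (f i) := map_sum (wR k l a) f s
theorem sum_wedge {D : ℕ} {ι : Type*} (s : Finset ι) (k l : ℕ) (a : Coeff D) (f : ι → Coeff D) :
    wedge k l (∑ i ∈ s, f i) a = ∑ i ∈ s, wedge k l (f i) a := map_sum (wL k l a) f s
theorem extd_sum {D : ℕ} {ι : Type*} (s : Finset ι) (k : ℕ) (f : ι → Coeff D) :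
    extd k (∑ i ∈ s, f i) = ∑ i ∈ s, extd k (f i) := map_sum (dL k) f s

theorem fm_sub {D : ℕ} {k : ℕ} {a b : Coeff D} (ha : Fm k a) (hb : Fm k b) : Fm k (a - b) := by
  constructor
  · intro n μ ν h
    simp only [Pi.sub_apply, ha.1 n μ ν h, hb.1 n μ ν h]
  · have : a - b = a + (-1 : ℝ) • b := by simp [sub_eq_add_neg]
    rw [this, alt_add, alt_smul, ha.2, hb.2]

/-- rotation -/
theorem pm_rot {D : ℕ} (k l : ℕ) (μ : ℕ → Fin D) (i : ℕ) :
    pm (k+1+l) (embL (k+1) l (finRotate (k+1))) μ i =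
      if i < k then μ (i+1) else if i = k then μ 0 else μ i := by
  rw [pm_embL]
  unfold pm
  by_cases h : i < k
  · have h' : i < k + 1 := by omega
    simp only [h, h', dif_pos, if_true]
    rw [finRotate_of_lt h]
  · by_cases h2 : i = k
    · subst h2
      have := finRotate_last' (n := i)
      simp [this]
    · have h' : ¬ i < k + 1 := by omega
      simp [h, h2, h']

theorem leib_tens {D : ℕ} (k l : ℕ) (ω θ : Coeff D) (hω : Dep k ω) :
    del (tens k ω θ) = tens (k+1) (del ω) θ +
      (fun n μ => tens k ω (del θ) n (pm (k+1+l) (embL (k+1) l (finRotate (k+1))) μ)) := by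
  funext n μ
  have hp : pm (k+1+l) (embL (k+1) l (finRotate (k+1))) μ =
    fun i => if i < k then μ (i+1) else if i = k then μ 0 else μ i := funext (pm_rot k l μ)
  simp only [del, tens, fdiff, Pi.add_apply, hp]
  set ν : ℕ → Fin D := fun i => if i < k then μ (i+1) else if i = k then μ 0 else μ i with hν
  have e1 : multiShift k n ν = multiShift k n (fun i => μ (i+1)) :=
    multiShift_congr _ _ _ _ (fun i hi => by simp [hν, hi])
  have e2 : ω n ν = ω n (fun i => μ (i+1)) :=
    hω _ _ _ (fun i hi => by simp [hν, hi])
  have e3 : (fun i => ν (i + 1 + k)) = fun i => μ (i + k + 1) := by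
    funext i
    have h1 : ¬ (i + 1 + k < k) := by omega
    have h2 : ¬ (i + 1 + k = k) := by omega
    simp only [hν, h1, h2, if_false]
    congr 1; omega
  have e4 : ν (0 + k) = μ 0 := by simp [hν]
  have e5 : multiShift (k+1) n μ = shiftSite (multiShift k n (fun i => μ (i+1))) (μ 0) := by
    funext a
    simp only [multiShift, shiftSite, Finset.sum_range_succ']
    ring
  have e6 : multiShift k (shiftSite n (μ 0)) (fun i => μ (i+1))
      = shiftSite (multiShift k n (fun i => μ (i+1))) (μ 0) := by
    funext a
    simp only [multiShift, shiftSite]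
    ring
  have e7 : (fun i => μ (i + (k + 1))) = fun i => μ (i + k + 1) := rfl
  rw [e1, e2, e5, e6, e7]
  rw [e3]
  simp only [Nat.zero_add, lt_irrefl, if_false, if_true]
  ring

theorem leibniz {D : ℕ} (k l : ℕ) (ω θ : Coeff D) (hω : Dep k ω) :
    extd (k+l) (wedge k l ω θ) = wedge (k+1) l (extd k ω) θ +
      (-1 : ℝ)^k • wedge k (l+1) ω (extd l θ) := by
  have h2 : ∀ c : Coeff D, alt (k+1+l) (fun n μ =>
      c n (pm (k+1+l) (embL (k+1) l (finRotate (k+1))) μ)) = (-1 : ℝ)^k • alt (k+1+l) c := by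
    intro c
    funext n μ
    rw [alt_pm, sign_embL, sign_finRotate]
    simp
  simp only [wedge_eq, extd_eq]
  rw [alt_del_alt, alt_alt_left, alt_alt_right _ _ _ _ hω, leib_tens k l _ _ hω, alt_add]
  rw [show k + l + 1 = k + 1 + l by ring, show k + (l + 1) = k + 1 + l by ring, h2]

theorem extd_extd {D : ℕ} (k : ℕ) (ω : Coeff D) : extd (k+1) (extd k ω) = 0 := by
  simp only [extd_eq]
  rw [alt_del_alt]
  have hs : del (del ω) = fun n μ => del (del ω) n (pm (k+1+1) (Equiv.swap 0 1) μ) := by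
    funext n μ
    have p0 : pm (k+1+1) (Equiv.swap 0 1) μ 0 = μ 1 := by
      simp [pm]
    have p1 : pm (k+1+1) (Equiv.swap 0 1) μ 1 = μ 0 := by
      have : (⟨1, by omega⟩ : Fin (k+1+1)) = 1 := rfl
      simp [pm, this]
    have p2 : (fun i => pm (k+1+1) (Equiv.swap 0 1) μ (i+1+1)) = fun i => μ (i+1+1) := by
      funext i
      unfold pm
      split_ifs with h
      · rw [Equiv.swap_apply_of_ne_of_ne]
        · intro h; simp [Fin.ext_iff] at h
        · intro h; simp [Fin.ext_iff] at h
      · rfl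
    have hc : shiftSite (shiftSite n (μ 0)) (μ 1) = shiftSite (shiftSite n (μ 1)) (μ 0) := by
      funext a; simp only [shiftSite]; ring
    simp only [del, fdiff, Nat.zero_add, p0, p1, p2, hc]
    ring
  funext n μ
  have h3 := alt_pm (k+1+1) (Equiv.swap 0 1) (del (del ω)) n μ
  rw [← hs, Equiv.Perm.sign_swap (by simp)] at h3
  simp at h3
  simp
  linarith

theorem two_succ (m : ℕ) : 2 * (m + 1) = 2 + 2 * m := by ring

theorem fm_wpow {D : ℕ} {F : Coeff D} (h : Fm 2 F) (m : ℕ) : Fm (2 * m) (wpow F m) := by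
  induction m with
  | zero => exact fm_one
  | succ m ih => rw [two_succ]; exact fm_wedge h ih

theorem wpow_succ_right {D : ℕ} {F : Coeff D} (h : Fm 2 F) (m : ℕ) :
    wedge (2 * m) 2 (wpow F m) F = wpow F (m + 1) := by
  induction m with
  | zero => exact (one_wedge h).trans (wedge_one h).symm
  | succ m ih =>
    rw [wpow, two_succ, wedge_assoc _ _ _ _ _ _ h.1, ih]
    rw [wpow.eq_2 F (m + 1)]
    rfl

theorem extd_wpow {D : ℕ} {F : Coeff D} (h : Fm 2 F) (hd : extd 2 F = 0) (m : ℕ) :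
    extd (2 * m) (wpow F m) = 0 := by
  induction m with
  | zero =>
    funext n μ
    simp [wpow, extd, fdiff, alt_def]
  | succ m ih =>
    rw [wpow, two_succ, leibniz _ _ _ _ h.1, hd, ih, zero_wedge, wedge_zero]
    simp

theorem tele {D : ℕ} {G H : Coeff D} (hG : Fm 2 G) (hH : Fm 2 H) (s : ℕ) :
    ∑ p ∈ Finset.HasAntidiagonal.antidiagonal s, wedge (2 * p.1) (2 + 2 * p.2) (wpow G p.1)
      (wedge 2 (2 * p.2) (H - G) (wpow H p.2)) = wpow H (s + 1) - wpow G (s + 1) := by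
  have key : ∀ p : ℕ × ℕ, wedge (2 * p.1) (2 + 2 * p.2) (wpow G p.1)
      (wedge 2 (2 * p.2) (H - G) (wpow H p.2)) =
      wedge (2 * p.1) (2 * (p.2 + 1)) (wpow G p.1) (wpow H (p.2 + 1)) -
      wedge (2 * (p.1 + 1)) (2 * p.2) (wpow G (p.1 + 1)) (wpow H p.2) := by
    intro p
    rw [sub_wedge, wedge_sub, two_succ p.2, wpow.eq_2 H p.2]
    congr 1
    rw [← wedge_assoc _ _ _ _ _ _ (fm_wpow hG p.1).1, wpow_succ_right hG]
    rfl
  simp only [key]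
  rw [Finset.sum_sub_distrib]
  have e1 := Finset.Nat.sum_antidiagonal_succ (n := s)
    (f := fun p => wedge (2 * p.1) (2 * p.2) (wpow G p.1) (wpow H p.2))
  have e2 := Finset.Nat.sum_antidiagonal_succ' (n := s)
    (f := fun p => wedge (2 * p.1) (2 * p.2) (wpow G p.1) (wpow H p.2))
  have e3 : wedge (2 * 0) (2 * (s + 1)) (wpow G 0) (wpow H (s + 1)) = wpow H (s + 1) :=
    one_wedge (fm_wpow hH _)
  have e4 : wedge (2 * (s + 1)) (2 * 0) (wpow G (s + 1)) (wpow H 0) = wpow G (s + 1) :=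
    wedge_one (fm_wpow hG _)
  rw [e1] at e2
  simp only [e3, e4] at e2
  rw [sub_eq_sub_iff_add_eq_add, add_comm, ← e2, add_comm]

theorem dT {D : ℕ} {F₀ F₁ F₂ u v : Coeff D} (h0 : Fm 2 F₀) (h1 : Fm 2 F₁)
    (d0 : extd 2 F₀ = 0) (d1 : extd 2 F₁ = 0) (d2 : extd 2 F₂ = 0) (h2 : Fm 2 F₂)
    (hu : Fm 1 u) (hv : Fm 1 v)
    (du : extd 1 u = F₁ - F₀) (dv : extd 1 v = F₂ - F₁) (a b c : ℕ) :
    extd (2 * a + (1 + (2 * b + (1 + 2 * c)))) (wedge (2 * a) (1 + (2 * b + (1 + 2 * c)))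
      (wpow F₀ a) (wedge 1 (2 * b + (1 + 2 * c)) u
        (wedge (2 * b) (1 + 2 * c) (wpow F₁ b) (wedge 1 (2 * c) v (wpow F₂ c))))) =
    wedge (2 * (a + b + 1)) (1 + 2 * c) (wedge (2 * a) (2 + 2 * b) (wpow F₀ a)
      (wedge 2 (2 * b) (F₁ - F₀) (wpow F₁ b))) (wedge 1 (2 * c) v (wpow F₂ c)) -
    wedge (2 * a) (1 + 2 * (b + c + 1)) (wpow F₀ a) (wedge 1 (2 * (b + c + 1)) u
      (wedge (2 * b) (2 + 2 * c) (wpow F₁ b) (wedge 2 (2 * c) (F₂ - F₁) (wpow F₂ c)))) := by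
  rw [leibniz _ _ _ _ (fm_wpow h0 a).1, leibniz _ _ _ _ hu.1, leibniz _ _ _ _ (fm_wpow h1 b).1,
    leibniz _ _ _ _ hv.1, extd_wpow h0 d0, extd_wpow h1 d1, extd_wpow h2 d2, du, dv,
    zero_wedge, zero_wedge, wedge_zero]
  simp only [pow_mul, zero_add, one_pow, one_smul, pow_one, smul_zero, add_zero, neg_one_sq]
  rw [wedge_add, wedge_smul, neg_one_smul, ← sub_eq_add_neg]
  congr 1
  · rw [show 2 * (a + b + 1) = 2 * a + (2 + 2 * b) by ring,
      wedge_assoc _ _ _ _ _ _ (fm_wpow h0 a).1, wedge_assoc _ _ _ _ _ _ (fm_sub h1 h0).1,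
      show 1 + (2 * b + (1 + 2 * c)) + 1 = 2 + 2 * b + (1 + 2 * c) by ring,
      show 2 + 2 * b + (1 + 2 * c) = 2 + (2 * b + (1 + 2 * c)) by ring]
  · rw [show 1 + (2 * b + (1 + 2 * c)) + 1 = 1 + 2 * (b + c + 1) by ring,
      show 2 * b + (1 + 2 * c) + 1 = 2 * (b + c + 1) by ring,
      show 1 + 2 * c + 1 = 2 + 2 * c by ring]

theorem triple1 {M : Type*} [AddCommMonoid M] (n : ℕ) (f : ℕ → ℕ → ℕ → M) :
    ∑ m ∈ Finset.Nat.antidiagonalTuple 3 n, f (m 0) (m 1) (m 2) =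
    ∑ p ∈ Finset.HasAntidiagonal.antidiagonal n, ∑ q ∈ Finset.HasAntidiagonal.antidiagonal p.2, f p.1 q.1 q.2 := by
  rw [Finset.sum_sigma']
  refine Finset.sum_bij' (fun m _ => ⟨(m 0, m 1 + m 2), (m 1, m 2)⟩)
    (fun x _ => ![x.1.1, x.2.1, x.2.2]) ?_ ?_ ?_ ?_ ?_
  · intro m hm
    simp [Finset.Nat.mem_antidiagonalTuple, Fin.sum_univ_three] at hm ⊢
    omega
  · rintro ⟨⟨a, b⟩, ⟨c, d⟩⟩ h
    simp [Finset.Nat.mem_antidiagonalTuple, Fin.sum_univ_three] at h ⊢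
    omega
  · intro m hm
    funext i; fin_cases i <;> rfl
  · rintro ⟨⟨a, b⟩, ⟨c, d⟩⟩ h
    simp at h ⊢
    omega
  · intro m hm
    rfl

theorem triple2 {M : Type*} [AddCommMonoid M] (n : ℕ) (f : ℕ → ℕ → ℕ → M) :
    ∑ m ∈ Finset.Nat.antidiagonalTuple 3 n, f (m 0) (m 1) (m 2) =
    ∑ p ∈ Finset.HasAntidiagonal.antidiagonal n, ∑ q ∈ Finset.HasAntidiagonal.antidiagonal p.1, f q.1 q.2 p.2 := by
  rw [Finset.sum_sigma']
  refine Finset.sum_bij' (fun m _ => ⟨(m 0 + m 1, m 2), (m 0, m 1)⟩)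
    (fun x _ => ![x.2.1, x.2.2, x.1.2]) ?_ ?_ ?_ ?_ ?_
  · intro m hm
    simp [Finset.Nat.mem_antidiagonalTuple, Fin.sum_univ_three] at hm ⊢
    omega
  · rintro ⟨⟨a, b⟩, ⟨c, d⟩⟩ h
    simp [Finset.Nat.mem_antidiagonalTuple, Fin.sum_univ_three] at h ⊢
    omega
  · intro m hm
    funext i; fin_cases i <;> rfl
  · rintro ⟨⟨a, b⟩, ⟨c, d⟩⟩ h
    simp at h ⊢
    omega
  · intro m hm
    rfl

/-- basic three-factor product -/
noncomputable def P3 {D : ℕ} (X u Z : Coeff D) (p : ℕ × ℕ) : Coeff D :=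
  wedge (2 * p.1) (1 + 2 * p.2) (wpow X p.1) (wedge 1 (2 * p.2) u (wpow Z p.2))

theorem Q1_eq {D : ℕ} (N : ℕ) (A A' : Coeff D) (h' : Fm 2 (curv A')) :
    Q1 (N + 2) A A' = ∑ p ∈ Finset.HasAntidiagonal.antidiagonal (N + 1), P3 (curv A) (A' - A) (curv A') p := by
  rw [Finset.Nat.sum_antidiagonal_eq_sum_range_succ_mk]
  unfold Q1
  refine Finset.sum_congr rfl fun m _ => ?_
  simp only [wedgeList, List.map_cons, List.map_nil, List.sum_cons, List.sum_nil, add_zero, P3]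
  rw [wedge_one (fm_wpow h' _)]
  rfl

theorem P3_zero_left {D : ℕ} (X X' u Z : Coeff D) (n : ℕ) :
    P3 X u Z (0, n) = P3 X' u Z (0, n) := rfl
theorem P3_zero_right {D : ℕ} (X u Z Z' : Coeff D) (n : ℕ) :
    P3 X u Z (n, 0) = P3 X u Z' (n, 0) := rfl
theorem P3_add {D : ℕ} (X u v Z : Coeff D) (p : ℕ × ℕ) :
    P3 X (u + v) Z p = P3 X u Z p + P3 X v Z p := by
  simp only [P3, add_wedge, wedge_add]

theorem sum_left {D : ℕ} {F₀ F₁ F₂ v : Coeff D} (h0 : Fm 2 F₀) (h1 : Fm 2 F₁) (N : ℕ) :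
    ∑ p ∈ Finset.HasAntidiagonal.antidiagonal N, ∑ q ∈ Finset.HasAntidiagonal.antidiagonal p.1,
      wedge (2 * (q.1 + q.2 + 1)) (1 + 2 * p.2) (wedge (2 * q.1) (2 + 2 * q.2) (wpow F₀ q.1)
      (wedge 2 (2 * q.2) (F₁ - F₀) (wpow F₁ q.2))) (wedge 1 (2 * p.2) v (wpow F₂ p.2)) =
    ∑ p ∈ Finset.HasAntidiagonal.antidiagonal (N + 1), P3 F₁ v F₂ p -
      ∑ p ∈ Finset.HasAntidiagonal.antidiagonal (N + 1), P3 F₀ v F₂ p := by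
  rw [Finset.Nat.sum_antidiagonal_succ, Finset.Nat.sum_antidiagonal_succ,
    P3_zero_left F₁ F₀, add_sub_add_left_eq_sub, ← Finset.sum_sub_distrib]
  refine Finset.sum_congr rfl fun p _ => ?_
  have : ∀ q ∈ Finset.HasAntidiagonal.antidiagonal p.1, 
      wedge (2 * (q.1 + q.2 + 1)) (1 + 2 * p.2) (wedge (2 * q.1) (2 + 2 * q.2) (wpow F₀ q.1)
      (wedge 2 (2 * q.2) (F₁ - F₀) (wpow F₁ q.2))) (wedge 1 (2 * p.2) v (wpow F₂ p.2)) =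
      wedge (2 * (p.1 + 1)) (1 + 2 * p.2) (wedge (2 * q.1) (2 + 2 * q.2) (wpow F₀ q.1)
      (wedge 2 (2 * q.2) (F₁ - F₀) (wpow F₁ q.2))) (wedge 1 (2 * p.2) v (wpow F₂ p.2)) := by
    intro q hq
    rw [Finset.HasAntidiagonal.mem_antidiagonal.1 hq]
  rw [Finset.sum_congr rfl this, ← sum_wedge, tele h0 h1, sub_wedge]
  rfl

theorem sum_right {D : ℕ} {F₀ F₁ F₂ u : Coeff D} (h1 : Fm 2 F₁) (h2 : Fm 2 F₂) (N : ℕ) :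
    ∑ p ∈ Finset.HasAntidiagonal.antidiagonal N, ∑ q ∈ Finset.HasAntidiagonal.antidiagonal p.2,
      wedge (2 * p.1) (1 + 2 * (q.1 + q.2 + 1)) (wpow F₀ p.1) (wedge 1 (2 * (q.1 + q.2 + 1)) u
      (wedge (2 * q.1) (2 + 2 * q.2) (wpow F₁ q.1)
        (wedge 2 (2 * q.2) (F₂ - F₁) (wpow F₂ q.2)))) =
    ∑ p ∈ Finset.HasAntidiagonal.antidiagonal (N + 1), P3 F₀ u F₂ p -
      ∑ p ∈ Finset.HasAntidiagonal.antidiagonal (N + 1), P3 F₀ u F₁ p := by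
  rw [Finset.Nat.sum_antidiagonal_succ', Finset.Nat.sum_antidiagonal_succ',
    P3_zero_right F₀ u F₂ F₁, add_sub_add_left_eq_sub, ← Finset.sum_sub_distrib]
  refine Finset.sum_congr rfl fun p _ => ?_
  have : ∀ q ∈ Finset.HasAntidiagonal.antidiagonal p.2,
      wedge (2 * p.1) (1 + 2 * (q.1 + q.2 + 1)) (wpow F₀ p.1) (wedge 1 (2 * (q.1 + q.2 + 1)) u
      (wedge (2 * q.1) (2 + 2 * q.2) (wpow F₁ q.1)
        (wedge 2 (2 * q.2) (F₂ - F₁) (wpow F₂ q.2)))) =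
      wedge (2 * p.1) (1 + 2 * (p.2 + 1)) (wpow F₀ p.1) (wedge 1 (2 * (p.2 + 1)) u
      (wedge (2 * q.1) (2 + 2 * q.2) (wpow F₁ q.1)
        (wedge 2 (2 * q.2) (F₂ - F₁) (wpow F₂ q.2)))) := by
    intro q hq
    rw [Finset.HasAntidiagonal.mem_antidiagonal.1 hq]
  rw [Finset.sum_congr rfl this, ← wedge_sum, ← wedge_sum, tele h1 h2, wedge_sub, wedge_sub]
  rfl

/-- **Cocycle relation for first Chern–Simons type classes** (case `k = 2` of the
descent equations): for lattice 1-forms `A₀, A₁, A₂` on `ℤ^D` and `r ≥ 2`,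
`Q_r^{(1)}(A₁,A₂) − Q_r^{(1)}(A₀,A₂) + Q_r^{(1)}(A₀,A₁) = d Q_r^{(2)}(A₀,A₁,A₂)`. -/
theorem chern_simons_cocycle (D r : ℕ) (hr : 2 ≤ r) (A₀ A₁ A₂ : Coeff D)
    (h₀ : IsLatticeForm D 1 A₀) (h₁ : IsLatticeForm D 1 A₁) (h₂ : IsLatticeForm D 1 A₂) :
    Q1 r A₁ A₂ - Q1 r A₀ A₂ + Q1 r A₀ A₁ = extd (2 * r - 2) (Q2 r A₀ A₁ A₂) := by
  obtain ⟨N, rfl⟩ : ∃ N, r = N + 2 := ⟨r - 2, by omega⟩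
  have a0 := fm_of h₀
  have a1 := fm_of h₁
  have a2 := fm_of h₂
  have f0 : Fm 2 (curv A₀) := fm_extd a0
  have f1 : Fm 2 (curv A₁) := fm_extd a1
  have f2 : Fm 2 (curv A₂) := fm_extd a2
  have d0 : extd 2 (curv A₀) = 0 := extd_extd 1 A₀
  have d1 : extd 2 (curv A₁) = 0 := extd_extd 1 A₁
  have d2 : extd 2 (curv A₂) = 0 := extd_extd 1 A₂
  have hQ : extd (2 * (N + 2) - 2) (Q2 (N + 2) A₀ A₁ A₂) =
      ∑ m ∈ Finset.Nat.antidiagonalTuple 3 N,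
      (wedge (2 * (m 0 + m 1 + 1)) (1 + 2 * m 2)
        (wedge (2 * m 0) (2 + 2 * m 1) (wpow (curv A₀) (m 0))
        (wedge 2 (2 * m 1) (curv A₁ - curv A₀) (wpow (curv A₁) (m 1))))
        (wedge 1 (2 * m 2) (A₂ - A₁) (wpow (curv A₂) (m 2))) -
      wedge (2 * m 0) (1 + 2 * (m 1 + m 2 + 1)) (wpow (curv A₀) (m 0))
        (wedge 1 (2 * (m 1 + m 2 + 1)) (A₁ - A₀)
        (wedge (2 * m 1) (2 + 2 * m 2) (wpow (curv A₁) (m 1))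
        (wedge 2 (2 * m 2) (curv A₂ - curv A₁) (wpow (curv A₂) (m 2)))))) := by
    unfold Q2
    rw [extd_sum]
    refine Finset.sum_congr rfl fun m hm => ?_
    rw [Finset.Nat.mem_antidiagonalTuple, Fin.sum_univ_three] at hm
    rw [← dT f0 f1 d0 d1 d2 f2 (fm_sub a1 a0) (fm_sub a2 a1) (extd_sub 1 A₁ A₀)
      (extd_sub 1 A₂ A₁)]
    simp only [wedgeList, List.map_cons, List.map_nil, List.sum_cons, List.sum_nil, add_zero]
    rw [wedge_one (fm_wpow f2 _)]
    congr 1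
    omega
  rw [hQ, Finset.sum_sub_distrib]
  rw [triple2 N (fun a b c => wedge (2 * (a + b + 1)) (1 + 2 * c)
        (wedge (2 * a) (2 + 2 * b) (wpow (curv A₀) a)
        (wedge 2 (2 * b) (curv A₁ - curv A₀) (wpow (curv A₁) b)))
        (wedge 1 (2 * c) (A₂ - A₁) (wpow (curv A₂) c))),
    triple1 N (fun a b c => wedge (2 * a) (1 + 2 * (b + c + 1)) (wpow (curv A₀) a)
        (wedge 1 (2 * (b + c + 1)) (A₁ - A₀)
        (wedge (2 * b) (2 + 2 * c) (wpow (curv A₁) b)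
        (wedge 2 (2 * c) (curv A₂ - curv A₁) (wpow (curv A₂) c))))),
    sum_left f0 f1, sum_right f1 f2, Q1_eq _ _ _ f2, Q1_eq _ _ _ f2, Q1_eq _ _ _ f1]
  have : ∀ p, P3 (curv A₀) (A₂ - A₀) (curv A₂) p =
      P3 (curv A₀) (A₂ - A₁) (curv A₂) p + P3 (curv A₀) (A₁ - A₀) (curv A₂) p := by
    intro p
    rw [← P3_add, sub_add_sub_cancel]
  simp only [this, Finset.sum_add_distrib]
  abel
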